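/- arXiv:2311.17840 — 3 statements merged into one kernel-verified Lean document; each statement's English description precedes it below -/
import Mathlib

section
/- For positive dissimilarities d_{ij} (i ≠ j in {1,…,n}) and an integer m ≥ 1, define OPT_m = inf over x_1,…,x_n ∈ ℝ^m of (1/n²)·Σ_{i ≠ j} (1 − ‖x_i − x_j‖/d_{ij})². There is an absolute constant C such that for every n, every family of positive dissimilarities d_{ij}, every ε ∈ (0,1), and every integer k ≥ 1: OPT_{⌈1/ε⌉} ≤ OPT_k + C·ε. -/
/-!
A configuration in a Euclidean space of any dimension is mapped to `ℝ^m` by a random sign matrix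
divided by `√m`. The image of a vector `x` is a Rademacher sum, so its norm `Y` satisfies
`𝔼 Y² = ‖x‖²` and `𝔼 Y⁴ ≤ (1 + 2/m) ‖x‖⁴`, and these two moments force `𝔼 Y ≥ (1 - 1/m) ‖x‖`.
The cost `(1 - Y/D)²` at dissimilarity `D` depends on `Y` only through `Y²` and `-Y`, so its mean
exceeds `(1 - ‖x‖/D)²` by at most `(2/m) ‖x‖/D`. Only configurations of cost at most `1` matter,
because collapsing all points costs at most `1`, and for these the average of `‖x‖/D` is bounded.
-/

namespace KamadaKawai

open Finset Function
open scoped BigOperators RealInnerProductSpace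

section RademacherSums

variable {ι E : Type*} [Fintype ι] [DecidableEq ι]

theorem expect_comp_update_neg {M : Type*} [AddCommMonoid M] [Module ℚ≥0 M]
    (f : (ι → ℤˣ) → M) (i : ι) :
    𝔼 s, f (update s i (-s i)) = 𝔼 s, f s := by
  have hinv : Involutive fun s : ι → ℤˣ ↦ update s i (-s i) := fun s ↦ by simp
  exact Fintype.expect_equiv hinv.toPerm _ _ fun s ↦ rfl

theorem expect_sum_insert_units_smul [AddCommGroup E] {i : ι} {t : Finset ι} (hi : i ∉ t)
    (v : ι → E) (φ : E → ℝ) :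
    𝔼 s : ι → ℤˣ, φ (∑ j ∈ insert i t, s j • v j) =
      𝔼 s : ι → ℤˣ, (φ (∑ j ∈ t, s j • v j + v i) + φ (∑ j ∈ t, s j • v j - v i)) / 2 := by
  set F : (ι → ℤˣ) → ℝ := fun s ↦ φ (∑ j ∈ insert i t, s j • v j)
  have average_flip : 𝔼 s, F s = 𝔼 s, (F s + F (update s i (-s i))) / 2 := by
    rw [← expect_div, expect_add_distrib, expect_comp_update_neg, add_self_div_two]
  refine average_flip.trans (expect_congr rfl fun s _ ↦ ?_)
  have hflip : ∑ j ∈ t, update s i (-s i) j • v j = ∑ j ∈ t, s j • v j :=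
    sum_congr rfl fun j hj ↦ by rw [update_of_ne (ne_of_mem_of_not_mem hj hi)]
  simp only [F, sum_insert hi, hflip, update_self]
  rcases Int.units_eq_one_or (s i) with h | h <;> simp [h, Units.smul_def, sub_eq_add_neg, add_comm]

variable [NormedAddCommGroup E] [InnerProductSpace ℝ E]

theorem expect_norm_sum_units_smul_sq (t : Finset ι) (v : ι → E) :
    𝔼 s : ι → ℤˣ, ‖∑ i ∈ t, s i • v i‖ ^ 2 = ∑ i ∈ t, ‖v i‖ ^ 2 := by
  induction t using Finset.induction_on with
  | empty => simp
  | insert i t hi ih =>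
    have parallelogram (u z : E) : (‖z + u‖ ^ 2 + ‖z - u‖ ^ 2) / 2 = ‖u‖ ^ 2 + ‖z‖ ^ 2 := by
      rw [norm_add_sq_real, norm_sub_sq_real]; ring
    rw [expect_sum_insert_units_smul hi v (‖·‖ ^ 2)]
    simp only [parallelogram, expect_add_distrib, Fintype.expect_const, ih, sum_insert hi]

theorem expect_inner_sum_units_smul_sq (t : Finset ι) (u : E) (v : ι → E) :
    𝔼 s : ι → ℤˣ, ⟪u, ∑ i ∈ t, s i • v i⟫ ^ 2 = ∑ i ∈ t, ⟪u, v i⟫ ^ 2 := by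
  have h := expect_norm_sum_units_smul_sq t fun i ↦ ⟪u, v i⟫
  simpa only [Real.norm_eq_abs, sq_abs, inner_sum, Units.smul_def, ← Int.cast_smul_eq_zsmul ℝ,
    real_inner_smul_right, smul_eq_mul] using h

theorem expect_norm_sum_units_smul_pow_four_le (t : Finset ι) (v : ι → E) :
    𝔼 s : ι → ℤˣ, ‖∑ i ∈ t, s i • v i‖ ^ 4 ≤
      (∑ i ∈ t, ‖v i‖ ^ 2) ^ 2 + 2 * ∑ i ∈ t, ∑ j ∈ t, ⟪v i, v j⟫ ^ 2 := by
  induction t using Finset.induction_on with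
  | empty => simp
  | insert i t hi ih =>
    have average_pow_four (u z : E) : (‖z + u‖ ^ 4 + ‖z - u‖ ^ 4) / 2 =
        ‖u‖ ^ 4 + 2 * ‖u‖ ^ 2 * ‖z‖ ^ 2 + ‖z‖ ^ 4 + 4 * ⟪u, z⟫ ^ 2 := by
      have pow_four (y : E) : ‖y‖ ^ 4 = (‖y‖ ^ 2) ^ 2 := by ring
      simp only [pow_four, norm_add_sq_real, norm_sub_sq_real, real_inner_comm u z]
      ring
    have gram_insert : ∑ j ∈ insert i t, ∑ l ∈ insert i t, ⟪v j, v l⟫ ^ 2 =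
        ‖v i‖ ^ 4 + 2 * ∑ j ∈ t, ⟪v i, v j⟫ ^ 2 + ∑ j ∈ t, ∑ l ∈ t, ⟪v j, v l⟫ ^ 2 := by
      simp only [sum_insert hi, sum_add_distrib, real_inner_self_eq_norm_sq,
        real_inner_comm (v i)]
      ring
    rw [expect_sum_insert_units_smul hi v (‖·‖ ^ 4), gram_insert, sum_insert hi]
    simp only [average_pow_four, expect_add_distrib, Fintype.expect_const, ← mul_expect,
      expect_norm_sum_units_smul_sq, expect_inner_sum_units_smul_sq]
    linarith [sq_nonneg (‖v i‖ ^ 2)]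

end RademacherSums

section SignProjection

variable {α κ : Type*} [Fintype α] [DecidableEq α]

/-- The contribution of the matrix entry in row `p.1` and column `p.2` to the image of `x`
under the `α × κ` matrix with all entries `1 / √(card α)`. -/
noncomputable def scaledEntry (x : EuclideanSpace ℝ κ) (p : α × κ) : EuclideanSpace ℝ α :=
  EuclideanSpace.single p.1 (x p.2 / √(Fintype.card α))

theorem scaledEntry_sub (x y : EuclideanSpace ℝ κ) (p : α × κ) :
    scaledEntry (x - y) p = scaledEntry x p - scaledEntry y p := by
  simp only [scaledEntry, PiLp.sub_apply, sub_div, PiLp.single_sub]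

variable [Fintype κ]

/-- The image of `x` under the matrix of signs `s`, rescaled by `1 / √(card α)` so that the
squared norm is preserved on average over `s`. It is written as a signed sum over the entries of
the matrix, which makes it a Rademacher sum. -/
noncomputable def signProjection (s : α × κ → ℤˣ) (x : EuclideanSpace ℝ κ) :
    EuclideanSpace ℝ α :=
  ∑ p, s p • scaledEntry x p

theorem signProjection_sub (s : α × κ → ℤˣ) (x y : EuclideanSpace ℝ κ) :
    signProjection s (x - y) = signProjection s x - signProjection s y := by
  simp only [signProjection, scaledEntry_sub, smul_sub, sum_sub_distrib]

variable (α) [Nonempty α]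

theorem sum_norm_scaledEntry_sq (x : EuclideanSpace ℝ κ) :
    ∑ p : α × κ, ‖scaledEntry x p‖ ^ 2 = ‖x‖ ^ 2 := by
  simp only [scaledEntry, PiLp.norm_single, Real.norm_eq_abs, sq_abs, div_pow, Nat.cast_nonneg,
    Real.sq_sqrt, Fintype.sum_prod_type, ← sum_div, sum_const, card_univ, nsmul_eq_mul,
    EuclideanSpace.real_norm_sq_eq]
  field_simp

theorem sum_inner_scaledEntry_sq (x : EuclideanSpace ℝ κ) :
    ∑ p : α × κ, ∑ q : α × κ, ⟪scaledEntry x p, scaledEntry x q⟫ ^ 2 =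
      ‖x‖ ^ 4 / Fintype.card α := by
  have inner_sq (a a' : α) (b b' : κ) : ⟪scaledEntry x (a, b), scaledEntry x (a', b')⟫ ^ 2 =
      if a = a' then x b ^ 2 * x b' ^ 2 / (Fintype.card α : ℝ) ^ 2 else 0 := by
    rw [scaledEntry, scaledEntry, EuclideanSpace.inner_single_left, PiLp.single_apply]
    split_ifs
    · simp [mul_pow, div_pow, div_mul_div_comm, ← sq]
    · simp
  have sum_inner_sq (p : α × κ) : ∑ q : α × κ, ⟪scaledEntry x p, scaledEntry x q⟫ ^ 2 =
      x p.2 ^ 2 * ‖x‖ ^ 2 / (Fintype.card α : ℝ) ^ 2 := by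
    simp only [Fintype.sum_prod_type_right, inner_sq, sum_ite_eq, mem_univ, if_true, ← sum_div,
      ← mul_sum, EuclideanSpace.real_norm_sq_eq]
  simp_rw [sum_inner_sq, ← sum_div, ← sum_mul, Fintype.sum_prod_type,
    ← EuclideanSpace.real_norm_sq_eq, sum_const, card_univ, nsmul_eq_mul]
  field_simp

variable {α} [DecidableEq κ]

theorem expect_norm_signProjection_sq (x : EuclideanSpace ℝ κ) :
    𝔼 s : α × κ → ℤˣ, ‖signProjection s x‖ ^ 2 = ‖x‖ ^ 2 := by
  rw [← sum_norm_scaledEntry_sq α]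
  exact expect_norm_sum_units_smul_sq _ _

theorem expect_norm_signProjection_pow_four_le (x : EuclideanSpace ℝ κ) :
    𝔼 s : α × κ → ℤˣ, ‖signProjection s x‖ ^ 4 ≤ (1 + 2 / Fintype.card α) * ‖x‖ ^ 4 :=
  calc 𝔼 s : α × κ → ℤˣ, ‖signProjection s x‖ ^ 4
      ≤ (‖x‖ ^ 2) ^ 2 + 2 * (‖x‖ ^ 4 / Fintype.card α) := by
        rw [← sum_inner_scaledEntry_sq α, ← sum_norm_scaledEntry_sq α]
        exact expect_norm_sum_units_smul_pow_four_le _ _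
    _ = (1 + 2 / Fintype.card α) * ‖x‖ ^ 4 := by ring

end SignProjection

section FourthMomentMethod

variable {Ω : Type*} [Fintype Ω] {Y : Ω → ℝ} {N δ : ℝ}

theorem one_sub_half_mul_le_expect (hY : ∀ ω, 0 ≤ Y ω) (hN : 0 ≤ N)
    (h₂ : 𝔼 ω, Y ω ^ 2 = N ^ 2) (h₄ : 𝔼 ω, Y ω ^ 4 ≤ (1 + δ) * N ^ 4) :
    (1 - δ / 2) * N ≤ 𝔼 ω, Y ω := by
  rcases hN.eq_or_lt with rfl | hN
  · simpa using expect_nonneg fun ω _ ↦ hY ω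
  -- The cubic `2 N³ - 3 N² y + y³` is nonnegative for `y ≥ 0`, with a double root at `y = N`.
  have tangent (y : ℝ) (hy : 0 ≤ y) : 3 * N ^ 2 * y ^ 2 - y ^ 4 ≤ 2 * N ^ 3 * y := by
    have : 0 ≤ y * ((y - N) ^ 2 * (y + 2 * N)) := by positivity
    linarith
  have averaged : 3 * N ^ 2 * N ^ 2 - 𝔼 ω, Y ω ^ 4 ≤ 2 * N ^ 3 * 𝔼 ω, Y ω := by
    nth_rw 2 [← h₂]
    rw [mul_expect, ← expect_sub_distrib, mul_expect]
    exact expect_le_expect fun ω _ ↦ tangent (Y ω) (hY ω)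
  refine le_of_mul_le_mul_left ?_ (by positivity : 0 < 2 * N ^ 3)
  linarith

theorem expect_one_sub_div_sq_le [Nonempty Ω] {D : ℝ} (hY : ∀ ω, 0 ≤ Y ω) (hN : 0 ≤ N)
    (hD : 0 < D) (h₂ : 𝔼 ω, Y ω ^ 2 = N ^ 2) (h₄ : 𝔼 ω, Y ω ^ 4 ≤ (1 + δ) * N ^ 4) :
    𝔼 ω, (1 - Y ω / D) ^ 2 ≤ (1 - N / D) ^ 2 + δ * (N / D) := by
  have hmean : (1 - δ / 2) * N / D ≤ (𝔼 ω, Y ω) / D := by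
    gcongr
    exact one_sub_half_mul_le_expect hY hN h₂ h₄
  calc 𝔼 ω, (1 - Y ω / D) ^ 2 = 1 - 2 * ((𝔼 ω, Y ω) / D) + (𝔼 ω, Y ω ^ 2) / D ^ 2 := by
        simp only [sub_sq, div_pow, one_pow, mul_one, expect_add_distrib, expect_sub_distrib,
          Fintype.expect_const, ← mul_expect, ← expect_div]
    _ ≤ 1 - 2 * ((1 - δ / 2) * N / D) + N ^ 2 / D ^ 2 := by rw [h₂]; gcongr
    _ = (1 - N / D) ^ 2 + δ * (N / D) := by ring

end FourthMomentMethod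

section Stress

variable {ι : Type*} [Fintype ι] {E : Type*} [NormedAddCommGroup E]

/-- The Kamada–Kawai cost of the configuration `x` for the dissimilarities `d`: the sum over
ordered pairs of distinct indices, divided by the square of the number of points. -/
noncomputable def stress (d : ι → ι → ℝ) (x : ι → E) : ℝ :=
  1 / (Fintype.card ι : ℝ) ^ 2 * ∑ p ∈ univ.offDiag, (1 - ‖x p.1 - x p.2‖ / d p.1 p.2) ^ 2

/-- The infimum `OPT` of the Kamada–Kawai cost over all configurations in the space `E`. -/
noncomputable def optStress (d : ι → ι → ℝ) (E : Type*) [NormedAddCommGroup E] : ℝ :=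
  ⨅ x : ι → E, stress d x

theorem stress_nonneg (d : ι → ι → ℝ) (x : ι → E) : 0 ≤ stress d x := by
  unfold stress; positivity

theorem optStress_le_stress (d : ι → ι → ℝ) (x : ι → E) : optStress d E ≤ stress d x :=
  ciInf_le ⟨0, Set.forall_mem_range.mpr (stress_nonneg d)⟩ x

variable (ι) in
theorem one_div_card_sq_mul_card_offDiag_le_one :
    1 / (Fintype.card ι : ℝ) ^ 2 * #(univ : Finset ι).offDiag ≤ 1 := by
  have hcard : #(univ : Finset ι).offDiag ≤ Fintype.card ι ^ 2 := by
    rw [offDiag_card, card_univ, sq]; exact Nat.sub_le _ _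
  rw [one_div_mul_eq_div]
  exact div_le_one_of_le₀ (mod_cast hcard) (by positivity)

theorem optStress_le_one (d : ι → ι → ℝ) : optStress d E ≤ 1 :=
  calc optStress d E ≤ stress d (fun _ ↦ (0 : E)) := optStress_le_stress d _
    _ ≤ 1 := by simpa [stress] using one_div_card_sq_mul_card_offDiag_le_one ι

theorem exists_euclideanSpace_stress_eq [InnerProductSpace ℝ E] (d : ι → ι → ℝ)
    (x : ι → E) : ∃ (r : ℕ) (y : ι → EuclideanSpace ℝ (Fin r)), stress d y = stress d x := by
  let S := Submodule.span ℝ (Set.range x)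
  have : FiniteDimensional ℝ S := FiniteDimensional.span_of_finite ℝ (Set.finite_range x)
  let e := (stdOrthonormalBasis ℝ S).repr
  refine ⟨_, fun i ↦ e ⟨x i, Submodule.subset_span ⟨i, rfl⟩⟩, ?_⟩
  simp only [stress, ← map_sub, LinearIsometryEquiv.norm_map, Submodule.coe_norm,
    Submodule.coe_sub]

variable {α κ : Type*} [Fintype α] [Nonempty α] [Fintype κ]

theorem expect_one_sub_norm_signProjection_div_sq_le [DecidableEq α] [DecidableEq κ]
    (x : EuclideanSpace ℝ κ) {D : ℝ} (hD : 0 < D) :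
    𝔼 s : α × κ → ℤˣ, (1 - ‖signProjection s x‖ / D) ^ 2 ≤
      (1 + 1 / Fintype.card α) * (1 - ‖x‖ / D) ^ 2 + 3 / Fintype.card α := by
  have hratio : ‖x‖ / D ≤ 3 / 2 + (1 - ‖x‖ / D) ^ 2 / 2 := by
    linarith [sq_nonneg (‖x‖ / D - 2)]
  calc 𝔼 s : α × κ → ℤˣ, (1 - ‖signProjection s x‖ / D) ^ 2
      ≤ (1 - ‖x‖ / D) ^ 2 + 2 / Fintype.card α * (‖x‖ / D) :=
        expect_one_sub_div_sq_le (fun _ ↦ norm_nonneg _) (norm_nonneg x) hD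
          (expect_norm_signProjection_sq x) (expect_norm_signProjection_pow_four_le x)
    _ ≤ (1 - ‖x‖ / D) ^ 2 + 2 / Fintype.card α * (3 / 2 + (1 - ‖x‖ / D) ^ 2 / 2) := by gcongr
    _ = _ := by ring

variable {d : ι → ι → ℝ}

theorem expect_stress_signProjection_le [DecidableEq α] [DecidableEq κ]
    (hd : ∀ i j, i ≠ j → 0 < d i j) (x : ι → EuclideanSpace ℝ κ) :
    𝔼 s : α × κ → ℤˣ, stress d (fun i ↦ signProjection s (x i)) ≤
      (1 + 1 / Fintype.card α) * stress d x + 3 / Fintype.card α := by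
  set m := (Fintype.card α : ℝ)
  set w := 1 / (Fintype.card ι : ℝ) ^ 2
  calc 𝔼 s : α × κ → ℤˣ, stress d (fun i ↦ signProjection s (x i))
      = w * ∑ p ∈ univ.offDiag,
          𝔼 s : α × κ → ℤˣ, (1 - ‖signProjection s (x p.1 - x p.2)‖ / d p.1 p.2) ^ 2 := by
        simp only [stress, signProjection_sub, ← mul_expect, expect_sum_comm, w]
    _ ≤ w * ∑ p ∈ univ.offDiag,
          ((1 + 1 / m) * (1 - ‖x p.1 - x p.2‖ / d p.1 p.2) ^ 2 + 3 / m) := by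
        gcongr with p hp
        exact expect_one_sub_norm_signProjection_div_sq_le _ (hd _ _ (mem_offDiag.mp hp).2.2)
    _ = (1 + 1 / m) * stress d x + 3 / m * (w * #(univ : Finset ι).offDiag) := by
        rw [sum_add_distrib, ← mul_sum, sum_const, nsmul_eq_mul, stress]; ring
    _ ≤ (1 + 1 / m) * stress d x + 3 / m :=
        add_le_add_right (mul_le_of_le_one_right (by positivity)
          (one_div_card_sq_mul_card_offDiag_le_one ι)) _

variable (α) in
theorem optStress_euclideanSpace_le_stress_add (hd : ∀ i j, i ≠ j → 0 < d i j)
    (x : ι → EuclideanSpace ℝ κ) :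
    optStress d (EuclideanSpace ℝ α) ≤ stress d x + 4 / Fintype.card α := by
  classical
  set m := (Fintype.card α : ℝ)
  rcases le_total 1 (stress d x) with hx | hx
  · have : 0 ≤ 4 / m := by positivity
    linarith [optStress_le_one (E := EuclideanSpace ℝ α) d]
  calc optStress d (EuclideanSpace ℝ α)
      ≤ 𝔼 s : α × κ → ℤˣ, stress d (fun i ↦ signProjection s (x i)) :=
        le_expect univ_nonempty fun s _ ↦ optStress_le_stress d _
    _ ≤ (1 + 1 / m) * stress d x + 3 / m := expect_stress_signProjection_le hd x
    _ = stress d x + 1 / m * stress d x + 3 / m := by ring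
    _ ≤ stress d x + 1 / m * 1 + 3 / m := by gcongr
    _ = stress d x + 4 / m := by ring

end Stress

end KamadaKawai

open KamadaKawai in
theorem stmt_8_general {ι : Type*} [Fintype ι] {d : ι → ι → ℝ} (hd : ∀ i j, i ≠ j → 0 < d i j)
    {ε : ℝ} (hε : 0 < ε) (E : Type*) [NormedAddCommGroup E] [InnerProductSpace ℝ E] :
    optStress d (EuclideanSpace ℝ (Fin ⌈1 / ε⌉₊)) ≤ optStress d E + 4 * ε := by
  have hm : 0 < ⌈1 / ε⌉₊ := Nat.ceil_pos.mpr (by positivity)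
  have : Nonempty (Fin ⌈1 / ε⌉₊) := Fin.pos_iff_nonempty.mp hm
  have hmε : 4 / (⌈1 / ε⌉₊ : ℝ) ≤ 4 * ε := by
    rw [div_eq_mul_one_div]
    gcongr
    exact (one_div_le (mod_cast hm) hε).mpr (Nat.le_ceil _)
  rw [← sub_le_iff_le_add]
  refine le_ciInf fun x ↦ sub_le_iff_le_add.mpr ?_
  obtain ⟨r, y, hy⟩ := exists_euclideanSpace_stress_eq d x
  calc optStress d (EuclideanSpace ℝ (Fin ⌈1 / ε⌉₊))
      ≤ stress d y + 4 / ⌈1 / ε⌉₊ := by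
        simpa using optStress_euclideanSpace_le_stress_add (Fin ⌈1 / ε⌉₊) hd y
    _ ≤ stress d x + 4 * ε := by rw [hy]; gcongr

/-- Dimension reduction for Kamada–Kawai: with
`OPT_m = inf over embeddings into ℝ^m of the average cost`, there is an absolute constant `C`
such that `OPT_{⌈1/ε⌉} ≤ OPT_k + C·ε` for all instances, all `ε ∈ (0,1)` and all `k ≥ 1`. -/
theorem stmt_8 :
    ∃ C : ℝ, ∀ (n : ℕ) (d : Fin n → Fin n → ℝ),
      (∀ i j, i ≠ j → 0 < d i j) →
      ∀ ε : ℝ, 0 < ε → ε < 1 → ∀ k : ℕ, 1 ≤ k →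
      (⨅ x : Fin n → EuclideanSpace ℝ (Fin ⌈1 / ε⌉₊),
          (1 / (n : ℝ) ^ 2) *
            ∑ p ∈ Finset.univ.offDiag, (1 - ‖x p.1 - x p.2‖ / d p.1 p.2) ^ 2)
        ≤ (⨅ x : Fin n → EuclideanSpace ℝ (Fin k),
            (1 / (n : ℝ) ^ 2) *
              ∑ p ∈ Finset.univ.offDiag, (1 - ‖x p.1 - x p.2‖ / d p.1 p.2) ^ 2) + C * ε := by
  refine ⟨4, fun n d hd ε hε _ k _ ↦ ?_⟩
  simpa [KamadaKawai.optStress, KamadaKawai.stress] using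
    stmt_8_general hd hε (EuclideanSpace ℝ (Fin k))
end

section
/- There is an absolute constant C such that the following holds. Let k, n ≥ 1 be integers and let μ be the probability measure on k×n real matrices under which the entries S_{ij} are independent Gaussians with mean 0 and variance 1/k. Then for every x ∈ ℝ^n, |∫ ‖S·x‖ dμ(S) − ‖x‖| ≤ (C/k)·‖x‖, where S·x ∈ ℝ^k is the matrix–vector product and ‖·‖ denotes the Euclidean norm. -/
open MeasureTheory ProbabilityTheory
open scoped NNReal

/-!
The rows of `S` are independent, so `S x` is a centred Gaussian vector with independent coordinates,
of variances `vᵢ ‖x‖²` when the entries of row `i` have variance `vᵢ`. Hence `Q = ‖S x‖²` has mean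
`a = (∑ vᵢ) ‖x‖²` and, by the Gaussian fourth moment, variance `2 (∑ vᵢ²) ‖x‖⁴`. Jensen's inequality
gives `E √Q ≤ √a`, and integrating a parabola that is tangent to the square root at `a` and lies
below it gives `√a - E √Q ≤ Var Q / (2 a √a)`. For `vᵢ = 1 / k` this is `‖x‖ / k`.
-/

section Sqrt

-- Division-free form of `√q ≥ √a + (q - a) / (2 * √a) - (q - a) ^ 2 / (2 * a * √a)`: a parabola
-- tangent to the square root at `a` that stays below it on all of `[0, ∞)`.
lemma mul_add_sub_sq_le_two_mul_sqrt {a q : ℝ} (ha : 0 ≤ a) (hq : 0 ≤ q) :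
    a * (q + a) - (q - a) ^ 2 ≤ 2 * (a * √a) * √q := by
  obtain ⟨s, hs, rfl⟩ : ∃ s, 0 ≤ s ∧ a = s ^ 2 := ⟨√a, Real.sqrt_nonneg a, (Real.sq_sqrt ha).symm⟩
  obtain ⟨t, ht, rfl⟩ : ∃ t, 0 ≤ t ∧ q = t ^ 2 := ⟨√q, Real.sqrt_nonneg q, (Real.sq_sqrt hq).symm⟩
  rw [Real.sqrt_sq hs, Real.sqrt_sq ht, ← sub_nonneg]
  calc 0 ≤ (t - s) ^ 2 * (t * (t + 2 * s)) := by positivity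
    _ = _ := by ring

variable {Ω : Type*} {mΩ : MeasurableSpace Ω} {μ : Measure Ω} {X : Ω → ℝ}

lemma integrable_sqrt [IsFiniteMeasure μ] (hX : Integrable X μ) :
    Integrable (fun ω ↦ √(X ω)) μ := by
  refine (hX.abs.add (integrable_const 1)).mono'
    (Real.continuous_sqrt.comp_aestronglyMeasurable hX.1) (.of_forall fun ω ↦ ?_)
  rw [Real.norm_of_nonneg (Real.sqrt_nonneg _), Pi.add_apply, Real.sqrt_le_iff]
  constructor <;> nlinarith [abs_nonneg (X ω), le_abs_self (X ω)]

variable [IsProbabilityMeasure μ]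

lemma integral_sqrt_le_sqrt_integral (hX₀ : 0 ≤ᵐ[μ] X) (hX : Integrable X μ) :
    ∫ ω, √(X ω) ∂μ ≤ √(∫ ω, X ω ∂μ) :=
  Real.strictConcaveOn_sqrt.concaveOn.le_map_integral Real.continuous_sqrt.continuousOn
    isClosed_Ici hX₀ hX (integrable_sqrt hX)

lemma sqrt_integral_sub_integral_sqrt_le (hX₀ : 0 ≤ᵐ[μ] X) (hX : MemLp X 2 μ)
    (hpos : 0 < ∫ ω, X ω ∂μ) :
    √(∫ ω, X ω ∂μ) - ∫ ω, √(X ω) ∂μ ≤ Var[X; μ] / (2 * ((∫ ω, X ω ∂μ) * √(∫ ω, X ω ∂μ))) := by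
  set a := ∫ ω, X ω ∂μ with ha
  have hXi : Integrable X μ := hX.integrable one_le_two
  have hlin : Integrable (fun ω ↦ a * (X ω + a)) μ := (hXi.add (integrable_const a)).const_mul a
  have hsq : Integrable (fun ω ↦ (X ω - a) ^ 2) μ := (hX.sub (memLp_const a)).integrable_sq
  have key : 2 * (a * a) - Var[X; μ] ≤ 2 * (a * √a) * ∫ ω, √(X ω) ∂μ :=
    calc 2 * (a * a) - Var[X; μ] = ∫ ω, (a * (X ω + a) - (X ω - a) ^ 2) ∂μ := by
          rw [integral_sub hlin hsq, integral_const_mul, integral_add hXi (integrable_const a),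
            ← ha, integral_const, probReal_univ, one_smul, variance_eq_integral hX.aemeasurable]
          ring
      _ ≤ ∫ ω, 2 * (a * √a) * √(X ω) ∂μ :=
          integral_mono_ae (hlin.sub hsq) ((integrable_sqrt hXi).const_mul _)
            (hX₀.mono fun ω hω ↦ mul_add_sub_sq_le_two_mul_sqrt hpos.le hω)
      _ = 2 * (a * √a) * ∫ ω, √(X ω) ∂μ := integral_const_mul _ _
  rw [le_div_iff₀ (by positivity)]
  have mul_sqrt_mul_sqrt : a * √a * √a = a * a := by rw [mul_assoc, Real.mul_self_sqrt hpos.le]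
  linarith

lemma abs_integral_sqrt_sub_sqrt_integral_le (hX₀ : 0 ≤ᵐ[μ] X) (hX : MemLp X 2 μ)
    (hpos : 0 < ∫ ω, X ω ∂μ) :
    |∫ ω, √(X ω) ∂μ - √(∫ ω, X ω ∂μ)|
      ≤ Var[X; μ] / (2 * ((∫ ω, X ω ∂μ) * √(∫ ω, X ω ∂μ))) := by
  rw [abs_sub_comm, abs_of_nonneg
    (sub_nonneg.2 (integral_sqrt_le_sqrt_integral hX₀ (hX.integrable one_le_two)))]
  exact sqrt_integral_sub_integral_sqrt_le hX₀ hX hpos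

end Sqrt

lemma integrable_pow_gaussianReal (m : ℝ) (v : ℝ≥0) (n : ℕ) :
    Integrable (fun x ↦ x ^ n) (gaussianReal m v) :=
  integrable_pow_of_mem_interior_integrableExpSet (X := fun x ↦ x) (by simp) n

lemma memLp_two_pow_gaussianReal (m : ℝ) (v : ℝ≥0) (n : ℕ) :
    MemLp (fun x ↦ x ^ n) 2 (gaussianReal m v) := by
  rw [memLp_two_iff_integrable_sq (by fun_prop)]
  simpa only [← pow_mul] using integrable_pow_gaussianReal m v (n * 2)

lemma iteratedDeriv_succ_id_mul_zero {𝕜 : Type*} [NontriviallyNormedField 𝕜] {f : 𝕜 → 𝕜} {n : ℕ}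
    (hf : ContDiffAt 𝕜 (n + 1) f 0) :
    iteratedDeriv (n + 1) (fun t ↦ t * f t) 0 = (n + 1) * iteratedDeriv n f 0 := by
  rw [iteratedDeriv_fun_mul (by fun_prop) hf, Finset.sum_eq_single 1]
  · simp [iteratedDeriv_one]
  · intro i _ hi
    simp [iteratedDeriv_fun_id_zero, hi]
  · simp

lemma integral_pow_add_two_gaussianReal (v : ℝ≥0) (n : ℕ) :
    ∫ x, x ^ (n + 2) ∂gaussianReal 0 v = v * (n + 1) * ∫ x, x ^ n ∂gaussianReal 0 v := by
  have moment_eq (k : ℕ) : ∫ x, x ^ k ∂gaussianReal 0 v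
      = iteratedDeriv k (fun t : ℝ ↦ Real.exp (v * t ^ 2 / 2)) 0 := by
    have h := iteratedDeriv_mgf_zero (X := fun x ↦ x) (μ := gaussianReal 0 v) (by simp) k
    simpa [mgf_fun_id_gaussianReal] using h.symm
  have deriv_mgf : deriv (fun t : ℝ ↦ Real.exp (v * t ^ 2 / 2))
      = fun t ↦ v * (t * Real.exp (v * t ^ 2 / 2)) := by
    ext t
    have h : HasDerivAt (fun t : ℝ ↦ v * t ^ 2 / 2) (v * t) t := by
      convert! ((hasDerivAt_pow 2 t).const_mul (v : ℝ)).div_const 2 using 1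
      push_cast
      ring
    rw [h.exp.deriv]
    ring
  rw [moment_eq, moment_eq, iteratedDeriv_succ', deriv_mgf, iteratedDeriv_const_mul_field,
    iteratedDeriv_succ_id_mul_zero (ContDiff.contDiffAt (by fun_prop)), mul_assoc]

lemma integral_sq_gaussianReal (v : ℝ≥0) : ∫ x, x ^ 2 ∂gaussianReal 0 v = v := by
  simpa using integral_pow_add_two_gaussianReal v 0

lemma variance_sq_gaussianReal (v : ℝ≥0) :
    Var[fun x ↦ x ^ 2; gaussianReal 0 v] = 2 * v ^ 2 := by
  rw [variance_eq_sub (memLp_two_pow_gaussianReal 0 v 2)]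
  have h := integral_pow_add_two_gaussianReal v 2
  simp only [Pi.pow_apply, ← pow_mul, integral_sq_gaussianReal] at h ⊢
  rw [h]
  push_cast
  ring

section GaussianVector

variable {ι κ : Type*} [Fintype ι] [Fintype κ]

lemma map_sum_pi_gaussianReal (m : ι → ℝ) (v : ι → ℝ≥0) :
    (Measure.pi fun i ↦ gaussianReal (m i) (v i)).map (fun w ↦ ∑ i, w i)
      = gaussianReal (∑ i, m i) (∑ i, v i) := by
  refine Measure.ext_of_charFun (funext fun t ↦ ?_)
  simp only [charFun_map_sum_pi_eq_prod, Finset.prod_apply, charFun_gaussianReal]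
  rw [← Complex.exp_sum]
  push_cast
  simp only [Finset.sum_sub_distrib, Finset.mul_sum, Finset.sum_mul, Finset.sum_div]

lemma map_sum_mul_pi_gaussianReal (m : ι → ℝ) (v : ι → ℝ≥0) (x : ι → ℝ) :
    (Measure.pi fun i ↦ gaussianReal (m i) (v i)).map (fun w ↦ ∑ i, w i * x i)
      = gaussianReal (∑ i, m i * x i) (∑ i, v i * ‖x i‖₊ ^ 2) := by
  have map_mul (i : ι) : (gaussianReal (m i) (v i)).map (· * x i)
      = gaussianReal (m i * x i) (v i * ‖x i‖₊ ^ 2) := by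
    rw [gaussianReal_map_mul_const, mul_comm (x i), mul_comm (v i)]
    congr 2
    exact NNReal.eq (by simp)
  rw [← map_sum_pi_gaussianReal]
  simp only [← map_mul]
  rw [← Measure.pi_map_pi (by fun_prop), Measure.map_map (by fun_prop) (by fun_prop)]
  rfl

lemma map_mulVec_pi_gaussianReal (m : ι → κ → ℝ) (v : ι → κ → ℝ≥0) (x : κ → ℝ) :
    (Measure.pi fun i ↦ Measure.pi fun j ↦ gaussianReal (m i j) (v i j)).map
        (fun S i ↦ ∑ j, S i j * x j)
      = Measure.pi fun i ↦ gaussianReal (∑ j, m i j * x j) (∑ j, v i j * ‖x j‖₊ ^ 2) := by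
  simp only [← map_sum_mul_pi_gaussianReal]
  exact Measure.pi_map_pi (f := fun _ (w : κ → ℝ) ↦ ∑ j, w j * x j) fun _ ↦
    Measurable.aemeasurable (by fun_prop)

lemma integral_sum_sq_pi_gaussianReal (v : ι → ℝ≥0) :
    ∫ g, ∑ i, g i ^ 2 ∂(Measure.pi fun i ↦ gaussianReal 0 (v i)) = ∑ i, (v i : ℝ) := by
  have hint (i : ι) : Integrable (fun g : ι → ℝ ↦ g i ^ 2)
      (Measure.pi fun i ↦ gaussianReal 0 (v i)) :=
    integrable_comp_eval (f := fun y ↦ y ^ 2) (integrable_pow_gaussianReal 0 (v i) 2)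
  rw [integral_finsetSum _ fun i _ ↦ hint i]
  refine Finset.sum_congr rfl fun i _ ↦ ?_
  rw [integral_comp_eval (f := fun y ↦ y ^ 2) (by fun_prop), integral_sq_gaussianReal]

lemma variance_sum_sq_pi_gaussianReal (v : ι → ℝ≥0) :
    Var[fun g ↦ ∑ i, g i ^ 2; Measure.pi fun i ↦ gaussianReal 0 (v i)]
      = 2 * ∑ i, (v i : ℝ) ^ 2 := by
  have h := variance_sum_pi fun i ↦ memLp_two_pow_gaussianReal 0 (v i) 2
  simpa only [variance_sq_gaussianReal, ← Finset.mul_sum, Finset.sum_fn] using h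

lemma memLp_two_sum_sq_pi_gaussianReal (v : ι → ℝ≥0) :
    MemLp (fun g ↦ ∑ i, g i ^ 2) 2 (Measure.pi fun i ↦ gaussianReal 0 (v i)) :=
  memLp_finsetSum _ fun i _ ↦ (memLp_two_pow_gaussianReal 0 (v i) 2).comp_measurePreserving
    (measurePreserving_eval _ i)

lemma abs_integral_sqrt_sum_sq_pi_gaussianReal_sub_le {v : ι → ℝ≥0} (hv : 0 < ∑ i, v i) :
    |∫ g, √(∑ i, g i ^ 2) ∂(Measure.pi fun i ↦ gaussianReal 0 (v i)) - √(∑ i, (v i : ℝ))|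
      ≤ (∑ i, (v i : ℝ) ^ 2) / ((∑ i, (v i : ℝ)) * √(∑ i, (v i : ℝ))) := by
  have h := abs_integral_sqrt_sub_sqrt_integral_le
    (.of_forall fun g ↦ Finset.sum_nonneg fun i _ ↦ sq_nonneg (g i))
    (memLp_two_sum_sq_pi_gaussianReal v)
    (by rw [integral_sum_sq_pi_gaussianReal]; exact_mod_cast hv)
  rwa [integral_sum_sq_pi_gaussianReal, variance_sum_sq_pi_gaussianReal,
    mul_div_mul_left _ _ two_ne_zero] at h

theorem stmt_9_general {v : ι → ℝ≥0} (hv : 0 < ∑ i, v i) (x : κ → ℝ) :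
    |(∫ S : ι → κ → ℝ, √(∑ i, (∑ j, S i j * x j) ^ 2)
          ∂(Measure.pi fun i ↦ Measure.pi fun _ ↦ gaussianReal 0 (v i)))
        - √(∑ i, (v i : ℝ)) * √(∑ j, x j ^ 2)|
      ≤ (∑ i, (v i : ℝ) ^ 2) / ((∑ i, (v i : ℝ)) * √(∑ i, (v i : ℝ))) * √(∑ j, x j ^ 2) := by
  rcases eq_or_ne x 0 with rfl | hx
  · simp
  set s := ∑ j, ‖x j‖₊ ^ 2 with hs
  have norm_sq_eq : ∑ j, x j ^ 2 = s := by simp [hs]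
  have s_pos : 0 < s := by
    obtain ⟨j, hj⟩ := Function.ne_iff.1 hx
    exact Finset.sum_pos' (fun _ _ ↦ zero_le)
      ⟨j, Finset.mem_univ j, pow_pos (nnnorm_pos.2 hj) 2⟩
  have law : (Measure.pi fun i ↦ Measure.pi fun _ ↦ gaussianReal 0 (v i)).map
      (fun (S : ι → κ → ℝ) i ↦ ∑ j, S i j * x j) = Measure.pi fun i ↦ gaussianReal 0 (v i * s) := by
    simpa [← Finset.mul_sum] using map_mulVec_pi_gaussianReal (fun _ _ ↦ 0) (fun i _ ↦ v i) x
  have h := abs_integral_sqrt_sum_sq_pi_gaussianReal_sub_le (v := fun i ↦ v i * s)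
    (by rw [← Finset.sum_mul]; positivity)
  have norm_continuous : Continuous fun g : ι → ℝ ↦ √(∑ i, g i ^ 2) := by fun_prop
  rw [← law, integral_map (Measurable.aemeasurable (by fun_prop))
    norm_continuous.aestronglyMeasurable] at h
  rw [norm_sq_eq]
  push_cast [mul_pow, ← Finset.sum_mul] at h ⊢
  rw [Real.sqrt_mul (by positivity)] at h
  refine h.trans_eq ?_
  field_simp
  rw [Real.sq_sqrt s.coe_nonneg]

end GaussianVector

/-- For a `k × n` matrix `S` of i.i.d. Gaussian entries of mean `0` and variance
`1/k`, for every `x ∈ ℝⁿ`, `|E‖Sx‖ − ‖x‖| ≤ (C/k)·‖x‖` for an absolute constant `C`, where the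
norms are Euclidean. -/
theorem stmt_9 :
    ∃ C : ℝ, ∀ (k n : ℕ), 1 ≤ k → 1 ≤ n → ∀ x : Fin n → ℝ,
      |(∫ S : Fin k → Fin n → ℝ,
            Real.sqrt (∑ i, (∑ j, S i j * x j) ^ 2)
          ∂(Measure.pi fun _ : Fin k =>
              Measure.pi fun _ : Fin n => gaussianReal 0 ((k : ℝ≥0)⁻¹)))
          - Real.sqrt (∑ j, (x j) ^ 2)|
        ≤ (C / k) * Real.sqrt (∑ j, (x j) ^ 2) := by
  refine ⟨1, fun k n hk _ x ↦ ?_⟩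
  have hk₀ : (k : ℝ) ≠ 0 := by positivity
  have sum_var : ∑ _ : Fin k, (((k : ℝ≥0)⁻¹ : ℝ≥0) : ℝ) = 1 := by simp [hk₀]
  have sum_var_sq : ∑ _ : Fin k, (((k : ℝ≥0)⁻¹ : ℝ≥0) : ℝ) ^ 2 = 1 / k := by
    simp only [NNReal.coe_inv, NNReal.coe_natCast, Finset.sum_const, Finset.card_univ,
      Fintype.card_fin, nsmul_eq_mul]
    field_simp
  simpa only [sum_var, sum_var_sq, Real.sqrt_one, one_mul, div_one] using
    stmt_9_general (v := fun _ : Fin k ↦ (k : ℝ≥0)⁻¹) (by rw [← NNReal.coe_pos]; simp [hk₀]) x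
end

section
/- There is an absolute constant C such that for every integer n ≥ 1, every ε ∈ (0,1), and every integer τ with 1 ≤ τ ≤ n, there exists a finite multiset 𝒮 of τ-element subsets of {1,…,n} with |𝒮| ≤ ⌈C·n/ε²⌉ such that for every set Q ⊆ {1,…,n} with |Q| ≥ ε·n, the fraction of members T ∈ 𝒮 with T ∩ Q ≠ ∅ differs by at most ε from the probability that a uniformly random τ-element subset of {1,…,n} intersects Q. -/
/-!
Draw `m = ⌈n / ε²⌉` independent uniformly random `τ`-subsets. By Hoeffding's inequality, for a fixed
`Q` the fraction of them meeting `Q` deviates from its mean by at least `ε` with probability at most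
`2 exp (-2mε²) ≤ 2 exp (-2n)`. There are `2 ^ n` sets `Q`, and `2 * 2 ^ n * exp (-2n) < 1`, so with
positive probability no `Q` deviates.
-/

open Finset MeasureTheory ProbabilityTheory

section Concentration

variable {Ω : Type*} [MeasurableSpace Ω] {μ : Measure Ω}

lemma measureReal_le_abs_le_of_hasSubgaussianMGF {X : Ω → ℝ} {c : NNReal}
    (hX : HasSubgaussianMGF X c μ) {t : ℝ} (ht : 0 ≤ t) :
    μ.real {ω | t ≤ |X ω|} ≤ 2 * Real.exp (-t ^ 2 / (2 * c)) := by
  have : IsFiniteMeasure μ := by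
    simpa [integrable_const_iff_isFiniteMeasure] using hX.integrable_exp_mul 0
  calc μ.real {ω | t ≤ |X ω|}
      = μ.real ({ω | t ≤ X ω} ∪ {ω | t ≤ (-X) ω}) := by
        simp only [le_abs, Set.ofPred_or, Pi.neg_apply]
    _ ≤ μ.real {ω | t ≤ X ω} + μ.real {ω | t ≤ (-X) ω} := measureReal_union_le _ _
    _ ≤ 2 * Real.exp (-t ^ 2 / (2 * c)) := by
        linarith [hX.measure_ge_le ht, hX.neg.measure_ge_le ht]

variable [IsProbabilityMeasure μ] {κ : Type*} [Fintype κ] {a b ε : ℝ}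

lemma hasSubgaussianMGF_pi_sum {X : Ω → ℝ} {c : NNReal} (hX : HasSubgaussianMGF X c μ) :
    HasSubgaussianMGF (fun w : κ → Ω ↦ ∑ j, X (w j)) (Fintype.card κ * c)
      (Measure.pi fun _ ↦ μ) := by
  have hcopy (j : κ) : HasSubgaussianMGF (fun w : κ → Ω ↦ X (w j)) c (Measure.pi fun _ ↦ μ) := by
    refine HasSubgaussianMGF.of_map (Y := Function.eval j)
      (measurable_pi_apply j).aemeasurable ?_
    rwa [(measurePreserving_eval (fun _ : κ ↦ μ) j).map_eq]
  simpa using HasSubgaussianMGF.sum_of_iIndepFun (iIndepFun_pi fun _ ↦ hX.aemeasurable)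
    (s := univ) fun j _ ↦ hcopy j

lemma measureReal_pi_le_abs_sum_sub_integral_le {f : Ω → ℝ} (hf : AEMeasurable f μ)
    (hfab : ∀ᵐ x ∂μ, f x ∈ Set.Icc a b) (hε : 0 ≤ ε) :
    (Measure.pi fun _ : κ ↦ μ).real {w | Fintype.card κ * ε ≤ |∑ j, (f (w j) - μ[f])|} ≤
      2 * Real.exp (-2 * Fintype.card κ * ε ^ 2 / (b - a) ^ 2) := by
  refine (measureReal_le_abs_le_of_hasSubgaussianMGF
    (hasSubgaussianMGF_pi_sum (hasSubgaussianMGF_of_mem_Icc hf hfab)) (by positivity)).trans_eq ?_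
  -- If `κ` is empty or `a = b`, both exponents are `0` because `x / 0 = 0`.
  rcases eq_or_ne (Fintype.card κ : ℝ) 0 with hκ | hκ
  · simp [hκ]
  rcases eq_or_ne (b - a) 0 with hab | hab
  · simp [hab]
  congr 2
  push_cast
  rw [Real.norm_eq_abs, div_pow, sq_abs]
  field

lemma frequently_pi_forall_abs_sum_sub_integral_lt {ι : Type*} [Fintype ι] {f : ι → Ω → ℝ}
    (hf : ∀ i, AEMeasurable (f i) μ) (hfab : ∀ i, ∀ᵐ x ∂μ, f i x ∈ Set.Icc a b) (hε : 0 ≤ ε)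
    (hι : Fintype.card ι * (2 * Real.exp (-2 * Fintype.card κ * ε ^ 2 / (b - a) ^ 2)) < 1) :
    ∃ᵐ w ∂(Measure.pi fun _ : κ ↦ μ),
      ∀ i, |∑ j, (f i (w j) - μ[f i])| < Fintype.card κ * ε := by
  set P := Measure.pi fun _ : κ ↦ μ
  let bad (i : ι) : Set (κ → Ω) := {w | Fintype.card κ * ε ≤ |∑ j, (f i (w j) - μ[f i])|}
  have hbad : P.real (⋃ i, bad i) < 1 := calc
    P.real (⋃ i, bad i) ≤ ∑ i, P.real (bad i) := measureReal_iUnion_fintype_le _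
    _ ≤ ∑ _i : ι, 2 * Real.exp (-2 * Fintype.card κ * ε ^ 2 / (b - a) ^ 2) :=
        sum_le_sum fun i _ ↦ measureReal_pi_le_abs_sum_sub_integral_le (hf i) (hfab i) hε
    _ < 1 := by simpa using hι
  intro hall
  have hall_bad : (⋃ i, bad i) =ᵐ[P] Set.univ := Filter.eventuallyEq_univ.2 <| by
    filter_upwards [hall] with w hw
    simpa [bad] using hw
  simp [measureReal_congr hall_bad] at hbad

end Concentration

section UniformSampling

variable {α : Type*}

lemma measureReal_uniformOn_finset [MeasurableSpace α] [MeasurableSingletonClass α]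
    (s : Finset α) (p : α → Prop) [DecidablePred p] :
    (uniformOn (s : Set α)).real {x | p x} = #{x ∈ s | p x} / #s := by
  classical
  rw [measureReal_def, ← uniformOn_inter_self s.finite_toSet]
  have hinter : (s : Set α) ∩ {x | p x} = ({x ∈ s | p x} : Finset α) := by ext; simp
  rw [hinter, uniformOn_apply_finset, inter_eq_right.2 (filter_subset _ _)]
  simp

lemma exists_multiset_forall_abs_card_filter_div_sub_lt {ι : Type*} [Fintype ι] {s : Finset α}
    (hs : s.Nonempty) (p : ι → α → Prop) [∀ i, DecidablePred (p i)] {m : ℕ} {ε : ℝ} (hε : 0 ≤ ε)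
    (hι : Fintype.card ι * (2 * Real.exp (-2 * m * ε ^ 2)) < 1) :
    ∃ S : Multiset α, S.card = m ∧ (∀ x ∈ S, x ∈ s) ∧
      ∀ i, |((S.filter (p i)).card : ℝ) / S.card - #{x ∈ s | p i x} / #s| < ε := by
  let _ : MeasurableSpace α := ⊤
  have := isProbabilityMeasure_uniformOn s.finite_toSet hs
  let f (i : ι) : α → ℝ := {x | p i x}.indicator 1
  have hmean (i : ι) : ∫ x, f i x ∂(uniformOn (s : Set α)) = #{x ∈ s | p i x} / #s := by
    rw [integral_indicator_one (by measurability), measureReal_uniformOn_finset]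
  have hsupp : ∀ᵐ w ∂(Measure.pi fun _ : Fin m ↦ uniformOn (s : Set α)), ∀ j, w j ∈ s :=
    ae_all_iff.2 fun j ↦ (Measure.quasiMeasurePreserving_eval _ j).ae <|
      ae_cond_mem s.measurableSet
  obtain ⟨w, hdev, hws⟩ := ((frequently_pi_forall_abs_sum_sub_integral_lt (κ := Fin m) (f := f)
    (a := 0) (b := 1) (fun i ↦ Measurable.of_discrete.aemeasurable)
    (fun i ↦ .of_forall fun x ↦ by by_cases hx : p i x <;> simp [f, hx]) hε
    (by simpa using hι)).and_eventually hsupp).exists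
  refine ⟨univ.val.map w, by simp, by simpa using hws, fun i ↦ ?_⟩
  have hm : (0 : ℝ) < m := by
    rcases m.eq_zero_or_pos with rfl | hm
    · simpa using hdev i
    · exact_mod_cast hm
  have hcount : (((univ.val.map w).filter (p i)).card : ℝ) = ∑ j, f i (w j) := by
    simp [f, Set.indicator_apply, Multiset.filter_map, Finset.card_def, -Fin.univ_val_map]
  have hdev_i : |∑ j, f i (w j) - m * (#{x ∈ s | p i x} / #s)| < m * ε := by
    simpa [hmean] using hdev i
  rw [hcount, Multiset.card_map, card_val, card_univ, Fintype.card_fin, div_sub' hm.ne', abs_div,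
    abs_of_pos hm, div_lt_iff₀' hm]
  exact hdev_i

end UniformSampling

lemma two_pow_mul_two_mul_exp_lt_one {n : ℕ} (hn : n ≠ 0) {x : ℝ} (hx : n ≤ x) :
    2 ^ n * (2 * Real.exp (-2 * x)) < 1 := by
  have htwo : (2 : ℝ) < Real.exp 1 := by linarith [Real.exp_one_gt_d9]
  calc 2 ^ n * (2 * Real.exp (-2 * x)) = 2 ^ (n + 1) * Real.exp (-2 * x) := by ring
    _ < Real.exp 1 ^ (n + 1) * Real.exp (-2 * x) := by gcongr
    _ = Real.exp (n + 1 - 2 * x) := by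
        rw [← Real.exp_nat_mul, ← Real.exp_add]
        push_cast
        ring_nf
    _ ≤ 1 := by
        have : (1 : ℝ) ≤ n := by exact_mod_cast Nat.one_le_iff_ne_zero.2 hn
        exact Real.exp_le_one_iff.2 (by linarith)

theorem stmt_18_general {V : Type*} [Fintype V] [DecidableEq V] [Nonempty V] {ε : ℝ} (hε : 0 < ε)
    {τ : ℕ} (hτ : τ ≤ Fintype.card V) :
    ∃ 𝒮 : Multiset (Finset V),
      0 < 𝒮.card ∧ 𝒮.card ≤ ⌈Fintype.card V / ε ^ 2⌉₊ ∧ (∀ T ∈ 𝒮, #T = τ) ∧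
      ∀ Q : Finset V,
        |((𝒮.filter fun T ↦ (T ∩ Q).Nonempty).card : ℝ) / 𝒮.card -
          #{T ∈ powersetCard τ univ | (T ∩ Q).Nonempty} / (Fintype.card V).choose τ| ≤ ε := by
  set m := ⌈Fintype.card V / ε ^ 2⌉₊
  have hm : 0 < m := Nat.ceil_pos.2 (by positivity)
  have hmε : Fintype.card V ≤ m * ε ^ 2 := (div_le_iff₀ (by positivity)).1 (Nat.le_ceil _)
  obtain ⟨𝒮, hcard, hmem, hdev⟩ := exists_multiset_forall_abs_card_filter_div_sub_lt
    (powersetCard_nonempty.2 hτ) (fun (Q T : Finset V) ↦ (T ∩ Q).Nonempty) (m := m) hε.le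
    (by simpa [mul_assoc] using two_pow_mul_two_mul_exp_lt_one Fintype.card_ne_zero hmε)
  refine ⟨𝒮, hcard ▸ hm, hcard.le, fun T hT ↦ (mem_powersetCard.1 (hmem T hT)).2, fun Q ↦ ?_⟩
  simpa using (hdev Q).le

/-- Sparsifying the Sherali–Adams LP: there is an absolute constant `C` such that
for every `n ≥ 1`, `ε ∈ (0,1)` and `1 ≤ τ ≤ n` there is a nonempty multiset `𝒮` of `τ`-element
subsets of `{1,…,n}` of size at most `⌈C·n/ε²⌉` such that for every `Q ⊆ {1,…,n}` with
`|Q| ≥ ε·n`, the fraction of members of `𝒮` intersecting `Q` is within `ε` of the probability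
that a uniformly random `τ`-element subset intersects `Q`. -/
theorem stmt_18 :
    ∃ C : ℝ, 0 < C ∧
      ∀ (n : ℕ), 1 ≤ n → ∀ ε : ℝ, 0 < ε → ε < 1 → ∀ τ : ℕ, 1 ≤ τ → τ ≤ n →
        ∃ 𝒮 : Multiset (Finset (Fin n)),
          0 < Multiset.card 𝒮 ∧
          Multiset.card 𝒮 ≤ ⌈C * n / ε ^ 2⌉₊ ∧
          (∀ T ∈ 𝒮, T.card = τ) ∧
          ∀ Q : Finset (Fin n), ε * n ≤ Q.card →
            |((𝒮.filter fun T => (T ∩ Q).Nonempty).card : ℝ) / (Multiset.card 𝒮 : ℝ) -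
                (((Finset.powersetCard τ (Finset.univ : Finset (Fin n))).filter
                    (fun T => (T ∩ Q).Nonempty)).card : ℝ) / (n.choose τ : ℝ)|
              ≤ ε := by
  refine ⟨1, one_pos, fun n hn ε hε _ τ _ hτ ↦ ?_⟩
  have : NeZero n := ⟨by lia⟩
  obtain ⟨𝒮, hpos, hle, hcard, hdev⟩ := stmt_18_general (V := Fin n) hε (hτ.trans_eq (by simp))
  exact ⟨𝒮, hpos, by simpa using hle, hcard, fun Q _ ↦ by simpa using hdev Q⟩
end
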